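/- For all α, β, γ, δ : Fin χ, the third response coefficients satisfy D[(α); (β, γ, δ)] f − D[(β); (γ, δ, α)] g − D[(γ); (δ, α, β)] g + D[(δ); (α, β, γ)] f = D[(β, γ); (α, δ)] g − D[(α, δ); (β, γ)] f; that is, Q_{α,βγδ}(B) − Q_{β,γδα}(−B) − Q_{γ,δαβ}(−B) + Q_{δ,αβγ}(B) = Q_{βγ,αδ}(−B) − Q_{αδ,βγ}(B). -/

import Mathlib

/-- Partial derivative of `F (λ, A)` with respect to the counting parameter `λ_i`. -/
noncomputable def pderivLam {χ : ℕ} (i : Fin χ)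
    (F : (Fin χ → ℝ) → (Fin χ → ℝ) → ℝ) : (Fin χ → ℝ) → (Fin χ → ℝ) → ℝ :=
  fun l a => fderiv ℝ (fun l' => F l' a) l (Pi.single i 1)

/-- Partial derivative of `F (λ, A)` with respect to the affinity `A_i`. -/
noncomputable def pderivAff {χ : ℕ} (i : Fin χ)
    (F : (Fin χ → ℝ) → (Fin χ → ℝ) → ℝ) : (Fin χ → ℝ) → (Fin χ → ℝ) → ℝ :=
  fun l a => fderiv ℝ (fun a' => F l a') a (Pi.single i 1)

/-- Mixed partial derivative `D[α; β] F`: derivatives with respect to the counting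
parameters `λ_{α₁}, …, λ_{α_m}` and the affinities `A_{β₁}, …, A_{β_n}`, evaluated at
`(λ, A) = (0, 0)`. -/
noncomputable def Dmix {χ : ℕ} (α β : List (Fin χ))
    (F : (Fin χ → ℝ) → (Fin χ → ℝ) → ℝ) : ℝ :=
  (List.foldr pderivLam (List.foldr pderivAff F β) α) 0 0

/-!
The linear map `T (λ, A) = (A - λ, A)` turns the fluctuation relation into `f = g ∘ T`, and it
exchanges the vertical direction `(0, e)` with the diagonal direction `(e, e)`. Hence, in the
derivative at the origin along `(e i, e i)` for `i ∈ s` and `(0, e i)` for `i ∉ s`, passing from `f`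
to `g` replaces `s` by its complement. Expanding `(e i, e i) = (e i, 0) + (0, e i)` by
multilinearity yields, in every order, the equality of the sum over `t ⊆ s` for `f` with the sum
over `t ⊆ sᶜ` for `g`, whose terms `t = ∅` cancel because `f` and `g` agree at `λ = 0`. The third
response coefficients come from the fourth order with `s` the positions of `α` and `δ`.
-/

open Function

section FluctuationRelation

variable (𝕜 : Type*) [NontriviallyNormedField 𝕜]
  {E V : Type*} [NormedAddCommGroup E] [NormedSpace 𝕜 E] [NormedAddCommGroup V] [NormedSpace 𝕜 V]
  {n : ℕ}

/-- The `n`-th order mixed derivative of `F (λ, A)` at the origin in which the direction `e i` is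
taken in the variable `λ` for `i ∈ s` and in the variable `A` for `i ∉ s`: this is the coefficient
`Q_{I, J}` with `I` and `J` the families of directions indexed by `s` and by its complement. -/
noncomputable def mixedDeriv (F : E → E → V) (e : Fin n → E) (s : Finset (Fin n)) : V :=
  iteratedFDeriv 𝕜 n (uncurry F) 0 (s.piecewise (fun i => (e i, 0)) (fun i => (0, e i)))

lemma sum_mixedDeriv_powerset (F : E → E → V) (e : Fin n → E) (s : Finset (Fin n)) :
    ∑ t ∈ s.powerset, mixedDeriv 𝕜 F e t =
      iteratedFDeriv 𝕜 n (uncurry F) 0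
        (s.piecewise (fun i => (e i, e i)) (fun i => (0, e i))) := by
  have diag_eq_add : (fun i => (e i, e i)) = (fun i => (e i, 0)) + fun i => ((0 : E), e i) := by
    ext i <;> simp
  rw [diag_eq_add, ContinuousMultilinearMap.map_piecewise_add]
  rfl

lemma mixedDeriv_empty {F : E → E → V} (hF : ContDiff 𝕜 n (uncurry F)) (e : Fin n → E) :
    mixedDeriv 𝕜 F e ∅ = iteratedFDeriv 𝕜 n (F 0) 0 e := by
  have restrict : F 0 = uncurry F ∘ ContinuousLinearMap.inr 𝕜 E E := rfl
  rw [restrict, ContinuousLinearMap.iteratedFDeriv_comp_right _ hF _ le_rfl]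
  simp [mixedDeriv, ContinuousMultilinearMap.compContinuousLinearMap_apply, Prod.mk_zero_zero]

variable (E) in
/-- The linear map `(λ, A) ↦ (A - λ, A)` through which the fluctuation relation expresses the
generating function in the field `B` by the one in the field `-B`. -/
def fluctuationMap : E × E →L[𝕜] E × E :=
  (ContinuousLinearMap.snd 𝕜 E E - ContinuousLinearMap.fst 𝕜 E E).prod
    (ContinuousLinearMap.snd 𝕜 E E)

lemma fluctuationMap_apply (p : E × E) : fluctuationMap 𝕜 E p = (p.2 - p.1, p.2) := rfl

variable {f g : E → E → V}

lemma iteratedFDeriv_piecewise_diag_compl (hg : ContDiff 𝕜 n (uncurry g))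
    (hFR : ∀ l A, f l A = g (A - l) A) (e : Fin n → E) (s : Finset (Fin n)) :
    iteratedFDeriv 𝕜 n (uncurry f) 0 (s.piecewise (fun i => (e i, e i)) (fun i => (0, e i))) =
      iteratedFDeriv 𝕜 n (uncurry g) 0
        (sᶜ.piecewise (fun i => (e i, e i)) (fun i => (0, e i))) := by
  have f_eq_comp : uncurry f = uncurry g ∘ fluctuationMap 𝕜 E := funext fun p => hFR p.1 p.2
  rw [f_eq_comp, ContinuousLinearMap.iteratedFDeriv_comp_right _ hg _ le_rfl, map_zero,
    ContinuousMultilinearMap.compContinuousLinearMap_apply]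
  congr 1 with i : 1
  by_cases hi : i ∈ s <;> simp [hi, fluctuationMap_apply]

theorem sum_mixedDeriv_powerset_compl (hg : ContDiff 𝕜 n (uncurry g))
    (hFR : ∀ l A, f l A = g (A - l) A) (e : Fin n → E) (s : Finset (Fin n)) :
    ∑ t ∈ s.powerset, mixedDeriv 𝕜 f e t = ∑ t ∈ sᶜ.powerset, mixedDeriv 𝕜 g e t := by
  rw [sum_mixedDeriv_powerset, sum_mixedDeriv_powerset,
    iteratedFDeriv_piecewise_diag_compl 𝕜 hg hFR]

theorem sum_mixedDeriv_powerset_erase_empty_compl (hf : ContDiff 𝕜 n (uncurry f))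
    (hg : ContDiff 𝕜 n (uncurry g)) (hFR : ∀ l A, f l A = g (A - l) A)
    (hfg : ∀ A, f 0 A = g 0 A) (e : Fin n → E) (s : Finset (Fin n)) :
    ∑ t ∈ s.powerset.erase ∅, mixedDeriv 𝕜 f e t =
      ∑ t ∈ sᶜ.powerset.erase ∅, mixedDeriv 𝕜 g e t := by
  rw [Finset.sum_erase_eq_sub (Finset.empty_mem_powerset s),
    Finset.sum_erase_eq_sub (Finset.empty_mem_powerset sᶜ),
    sum_mixedDeriv_powerset_compl 𝕜 hg hFR, mixedDeriv_empty 𝕜 hf, mixedDeriv_empty 𝕜 hg,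
    funext hfg]

end FluctuationRelation

section IteratedDirDeriv

variable (𝕜 : Type*) [NontriviallyNormedField 𝕜]
  {E V : Type*} [NormedAddCommGroup E] [NormedSpace 𝕜 E] [NormedAddCommGroup V] [NormedSpace 𝕜 V]

/-- The iterated directional derivative `∂_{v₁} ⋯ ∂_{v_k} G` along a list `[v₁, …, v_k]`, the last
direction being differentiated first as in `Dmix`. -/
noncomputable def iteratedDirDeriv (L : List E) (G : E → V) : E → V :=
  L.foldr (fun v H p => fderiv 𝕜 H p v) G

variable {𝕜} {G : E → V}

lemma iteratedDirDeriv_cons (v : E) (L : List E) :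
    iteratedDirDeriv 𝕜 (v :: L) G = fun p => fderiv 𝕜 (iteratedDirDeriv 𝕜 L G) p v := rfl

lemma iteratedDirDeriv_append (L L' : List E) :
    iteratedDirDeriv 𝕜 (L ++ L') G = iteratedDirDeriv 𝕜 L (iteratedDirDeriv 𝕜 L' G) :=
  List.foldr_append

lemma contDiff_iteratedDirDeriv {m : ℕ} {L : List E} (hG : ContDiff 𝕜 (m + L.length : ℕ) G) :
    ContDiff 𝕜 m (iteratedDirDeriv 𝕜 L G) := by
  induction L generalizing m with
  | nil => exact hG
  | cons v L ih =>
    have h : ContDiff 𝕜 (m + 1 : ℕ) (iteratedDirDeriv 𝕜 L G) :=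
      ih (by rwa [List.length_cons, ← add_assoc, add_right_comm] at hG)
    exact (h.fderiv_right (by norm_cast)).clm_apply contDiff_const

lemma differentiable_iteratedDirDeriv {L : List E} (hG : ContDiff 𝕜 (L.length + 1 : ℕ) G) :
    Differentiable 𝕜 (iteratedDirDeriv 𝕜 L G) :=
  (contDiff_iteratedDirDeriv (m := 1) (by rwa [add_comm])).differentiable (by simp)

lemma iteratedDirDeriv_ofFn {n : ℕ} (hG : ContDiff 𝕜 n G) (v : Fin n → E) :
    iteratedDirDeriv 𝕜 (List.ofFn v) G = fun p => iteratedFDeriv 𝕜 n G p v := by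
  induction n with
  | zero => simp [iteratedDirDeriv]
  | succ n ih =>
    funext p
    have diff : Differentiable 𝕜 (iteratedFDeriv 𝕜 n G) :=
      hG.differentiable_iteratedFDeriv (by exact_mod_cast n.lt_succ_self)
    rw [List.ofFn_succ, iteratedDirDeriv_cons, ih (hG.of_le (by exact_mod_cast n.le_succ)),
      iteratedFDeriv_succ_apply_left]
    exact fderiv_continuousMultilinear_apply_const_apply (diff p) (Fin.tail v) (v 0)

lemma fderiv_fderiv_apply_comm [IsRCLikeNormedField 𝕜] (hG : ContDiff 𝕜 2 G) (u v p : E) :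
    fderiv 𝕜 (fun q => fderiv 𝕜 G q v) p u = fderiv 𝕜 (fun q => fderiv 𝕜 G q u) p v := by
  have diff : DifferentiableAt 𝕜 (fderiv 𝕜 G) p :=
    (hG.fderiv_right (m := 1) le_rfl).differentiable (by simp) p
  have symm : IsSymmSndFDerivAt 𝕜 G p := hG.contDiffAt.isSymmSndFDerivAt (by simp)
  simpa [fderiv_clm_apply diff (differentiableAt_const _)] using symm u v

lemma iteratedDirDeriv_perm [IsRCLikeNormedField 𝕜] {L L' : List E} (h : L.Perm L')
    (hG : ContDiff 𝕜 L.length G) : iteratedDirDeriv 𝕜 L G = iteratedDirDeriv 𝕜 L' G := by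
  induction h with
  | nil => rfl
  | @cons v L _ _ ih =>
    rw [iteratedDirDeriv_cons, iteratedDirDeriv_cons,
      ih (hG.of_le (by exact_mod_cast L.length.le_succ))]
  | swap u v L =>
    funext p
    exact fderiv_fderiv_apply_comm
      (contDiff_iteratedDirDeriv (m := 2) (by rwa [add_comm])) v u p
  | trans hL _ ih ih' => rw [ih hG, ih' (hL.length_eq ▸ hG)]

lemma iteratedDirDeriv_map_of_perm_finRange [IsRCLikeNormedField 𝕜] {n : ℕ} {L : List (Fin n)}
    (hL : L.Perm (List.finRange n)) (hG : ContDiff 𝕜 n G) (v : Fin n → E) (p : E) :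
    iteratedDirDeriv 𝕜 (L.map v) G p = iteratedFDeriv 𝕜 n G p v := by
  have map_perm : (L.map v).Perm (List.ofFn v) := List.ofFn_eq_map ▸ hL.map v
  rw [iteratedDirDeriv_perm map_perm (by simpa [hL.length_eq] using hG), iteratedDirDeriv_ofFn hG]

end IteratedDirDeriv

section Dmix

variable {χ : ℕ} {F : (Fin χ → ℝ) → (Fin χ → ℝ) → ℝ}

lemma uncurry_pderivLam (hF : Differentiable ℝ (uncurry F)) (i : Fin χ) :
    uncurry (pderivLam i F) = fun p => fderiv ℝ (uncurry F) p (Pi.single i 1, 0) := by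
  ext ⟨l, A⟩
  have h := HasFDerivAt.comp (f := (·, A)) l (hF (l, A)).hasFDerivAt
    (hasFDerivAt_prodMk_left l A)
  exact DFunLike.congr_fun h.fderiv (Pi.single i 1)

lemma uncurry_pderivAff (hF : Differentiable ℝ (uncurry F)) (i : Fin χ) :
    uncurry (pderivAff i F) = fun p => fderiv ℝ (uncurry F) p (0, Pi.single i 1) := by
  ext ⟨l, A⟩
  have h := (hF (l, A)).hasFDerivAt.comp A (hasFDerivAt_prodMk_right l A)
  exact DFunLike.congr_fun h.fderiv (Pi.single i 1)

lemma uncurry_foldr_pderivLam {α : List (Fin χ)} (hF : ContDiff ℝ α.length (uncurry F)) :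
    uncurry (α.foldr pderivLam F) =
      iteratedDirDeriv ℝ (α.map fun i => (Pi.single i 1, 0)) (uncurry F) := by
  induction α with
  | nil => rfl
  | cons i α ih =>
    specialize ih (hF.of_le (by exact_mod_cast α.length.le_succ))
    rw [List.foldr_cons, uncurry_pderivLam, ih, List.map_cons, iteratedDirDeriv_cons]
    rw [ih]
    exact differentiable_iteratedDirDeriv (by simpa using hF)

lemma uncurry_foldr_pderivAff {β : List (Fin χ)} (hF : ContDiff ℝ β.length (uncurry F)) :
    uncurry (β.foldr pderivAff F) =
      iteratedDirDeriv ℝ (β.map fun i => (0, Pi.single i 1)) (uncurry F) := by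
  induction β with
  | nil => rfl
  | cons i β ih =>
    specialize ih (hF.of_le (by exact_mod_cast β.length.le_succ))
    rw [List.foldr_cons, uncurry_pderivAff, ih, List.map_cons, iteratedDirDeriv_cons]
    rw [ih]
    exact differentiable_iteratedDirDeriv (by simpa using hF)

lemma Dmix_eq_iteratedDirDeriv {α β : List (Fin χ)}
    (hF : ContDiff ℝ (α.length + β.length : ℕ) (uncurry F)) :
    Dmix α β F = iteratedDirDeriv ℝ
      (α.map (fun i => (Pi.single i 1, 0)) ++ β.map fun i => (0, Pi.single i 1))
      (uncurry F) 0 := by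
  have aff := uncurry_foldr_pderivAff (hF.of_le (by exact_mod_cast Nat.le_add_left _ _))
  have lam : uncurry (α.foldr pderivLam (β.foldr pderivAff F)) = _ :=
    uncurry_foldr_pderivLam (aff ▸ contDiff_iteratedDirDeriv (by simpa using hF))
  rw [iteratedDirDeriv_append, ← aff, ← lam]
  rfl

lemma Dmix_map_eq_mixedDeriv {n : ℕ} (hF : ContDiff ℝ n (uncurry F)) (ε : Fin n → Fin χ)
    {I J : List (Fin n)} (hIJ : (I ++ J).Perm (List.finRange n)) :
    Dmix (I.map ε) (J.map ε) F = mixedDeriv ℝ F (fun i => Pi.single (ε i) 1) I.toFinset := by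
  have length_add : I.length + J.length = n := by simpa using hIJ.length_eq
  have disjoint : I.Disjoint J :=
    List.disjoint_of_nodup_append (hIJ.nodup_iff.2 (List.nodup_finRange n))
  rw [Dmix_eq_iteratedDirDeriv (by simpa [length_add] using hF), mixedDeriv,
    ← iteratedDirDeriv_map_of_perm_finRange hIJ hF, List.map_append, List.map_map, List.map_map]
  congr 2
  · exact List.map_congr_left fun i hi => by simp [hi]
  · exact List.map_congr_left fun i hi => by simp [show i ∉ I from fun hI => disjoint hI hi]

end Dmix

theorem third_response_from_second_responses_second_cumulants_general {χ : ℕ}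
    {f g : (Fin χ → ℝ) → (Fin χ → ℝ) → ℝ}
    (hf : ContDiff ℝ 4 (uncurry f)) (hg : ContDiff ℝ 4 (uncurry g))
    (hFR : ∀ l A : Fin χ → ℝ, f l A = g (A - l) A)
    (hfg : ∀ A : Fin χ → ℝ, f 0 A = g 0 A)
    (α β γ δ : Fin χ) :
    Dmix [α] [β, γ, δ] f - Dmix [β] [γ, δ, α] g - Dmix [γ] [δ, α, β] g +
        Dmix [δ] [α, β, γ] f =
      Dmix [β, γ] [α, δ] g - Dmix [α, δ] [β, γ] f := by
  let ε : Fin 4 → Fin χ := ![α, β, γ, δ]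
  let e : Fin 4 → Fin χ → ℝ := fun i => Pi.single (ε i) 1
  have subsets : ({0, 3} : Finset (Fin 4)).powerset.erase ∅ = {{0}, {3}, {0, 3}} := by decide
  have subsets_compl : ({0, 3} : Finset (Fin 4))ᶜ.powerset.erase ∅ = {{1}, {2}, {1, 2}} := by
    decide
  have key := sum_mixedDeriv_powerset_erase_empty_compl ℝ hf hg hFR hfg e {0, 3}
  rw [subsets, subsets_compl, Finset.sum_insert (by decide), Finset.sum_pair (by decide),
    Finset.sum_insert (by decide), Finset.sum_pair (by decide)] at key
  have f_α : Dmix [α] [β, γ, δ] f = mixedDeriv ℝ f e {0} :=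
    Dmix_map_eq_mixedDeriv hf ε (I := [0]) (J := [1, 2, 3]) (by decide)
  have f_δ : Dmix [δ] [α, β, γ] f = mixedDeriv ℝ f e {3} :=
    Dmix_map_eq_mixedDeriv hf ε (I := [3]) (J := [0, 1, 2]) (by decide)
  have f_αδ : Dmix [α, δ] [β, γ] f = mixedDeriv ℝ f e {0, 3} :=
    Dmix_map_eq_mixedDeriv hf ε (I := [0, 3]) (J := [1, 2]) (by decide)
  have g_β : Dmix [β] [γ, δ, α] g = mixedDeriv ℝ g e {1} :=
    Dmix_map_eq_mixedDeriv hg ε (I := [1]) (J := [2, 3, 0]) (by decide)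
  have g_γ : Dmix [γ] [δ, α, β] g = mixedDeriv ℝ g e {2} :=
    Dmix_map_eq_mixedDeriv hg ε (I := [2]) (J := [3, 0, 1]) (by decide)
  have g_βγ : Dmix [β, γ] [α, δ] g = mixedDeriv ℝ g e {1, 2} :=
    Dmix_map_eq_mixedDeriv hg ε (I := [1, 2]) (J := [0, 3]) (by decide)
  rw [f_α, f_δ, f_αδ, g_β, g_γ, g_βγ]
  linarith only [key]

/-- `Q_{α,βγδ}(B) − Q_{β,γδα}(−B) − Q_{γ,δαβ}(−B) + Q_{δ,αβγ}(B)
      = Q_{βγ,αδ}(−B) − Q_{αδ,βγ}(B)`. -/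
theorem third_response_from_second_responses_second_cumulants {χ : ℕ} (hχ : 1 ≤ χ)
    (f g : (Fin χ → ℝ) → (Fin χ → ℝ) → ℝ)
    (hf : ContDiff ℝ (⊤ : ℕ∞) (Function.uncurry f))
    (hg : ContDiff ℝ (⊤ : ℕ∞) (Function.uncurry g))
    (hFR : ∀ l A : Fin χ → ℝ, f l A = g (A - l) A)
    (hfnorm : ∀ A : Fin χ → ℝ, f 0 A = 0)
    (hgnorm : ∀ A : Fin χ → ℝ, g 0 A = 0)
    (α β γ δ : Fin χ) :
    Dmix [α] [β, γ, δ] f - Dmix [β] [γ, δ, α] g - Dmix [γ] [δ, α, β] g +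
        Dmix [δ] [α, β, γ] f =
      Dmix [β, γ] [α, δ] g - Dmix [α, δ] [β, γ] f := by
  have hfg (A : Fin χ → ℝ) : f 0 A = g 0 A := (hfnorm A).trans (hgnorm A).symm
  exact third_response_from_second_responses_second_cumulants_general
    (contDiff_infty.1 hf 4) (contDiff_infty.1 hg 4) hFR hfg α β γ δ
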